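/- arXiv:2110.01332 — 6 statements merged into one kernel-verified Lean document; each statement's English description precedes it below -/
import Mathlib

section
/- Suppose (X, Σ, μ) satisfies condition (⋆): whenever (X_n) is an increasing sequence of measurable sets with μ(X_n) < ∞ for all n and ⋃_n X_n = X, every measurable set A with μ(A) < ∞ is contained in X_n for some n. If moreover u·w is μ-integrable, then for every A ∈ 𝒜 with μ(A) < ∞ one has ∫_A |μ[u·w|𝒜]|² dμ < ∞ (i.e. L²(𝒜) is contained in the domain of the operator f ↦ μ[w·u·f|𝒜]). -/
open MeasureTheory

/-! Condition (⋆), applied to the sets `{‖f‖ ≤ n}` cut down to finite measure by σ-finiteness,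
says that a measurable `f` is bounded on every set of finite measure, hence square integrable
there; take for `f` the conditional expectation. -/

section Star

variable {X : Type*} {m0 : MeasurableSpace X} {μ : Measure X} {A : Set X}

/-- Condition (⋆): every exhaustion of the space by an increasing sequence of measurable sets of
finite measure absorbs each measurable set of finite measure in finitely many steps. Both the
covering and the final inclusion are meant literally, not up to null sets. -/
def ExhaustionsAbsorbFiniteMeasure (μ : Measure X) : Prop :=
  ∀ s : ℕ → Set X, (∀ n, MeasurableSet (s n)) → Monotone s → (∀ n, μ (s n) < ⊤) →
    (⋃ n, s n) = Set.univ → ∀ A : Set X, MeasurableSet A → μ A < ⊤ → ∃ n, A ⊆ s n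

namespace ExhaustionsAbsorbFiniteMeasure

theorem exists_subset_of_iUnion_eq_univ [SigmaFinite μ] (hμ : ExhaustionsAbsorbFiniteMeasure μ)
    {s : ℕ → Set X} (hs : ∀ n, MeasurableSet (s n)) (hmono : Monotone s)
    (hcover : ⋃ n, s n = Set.univ) (hA : μ A < ⊤) : ∃ n, A ⊆ s n := by
  have hcover_inter : ⋃ n, spanningSets μ n ∩ s n = Set.univ := by
    rw [Set.iUnion_inter_of_monotone (monotone_spanningSets μ) hmono, iUnion_spanningSets, hcover,
      Set.univ_inter]
  obtain ⟨n, hn⟩ := hμ (fun n => spanningSets μ n ∩ s n)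
    (fun n => (measurableSet_spanningSets μ n).inter (hs n))
    ((monotone_spanningSets μ).inter hmono)
    (fun n => measure_inter_lt_top_of_left_ne_top (measure_spanningSets_lt_top μ n).ne)
    hcover_inter (toMeasurable μ A) (measurableSet_toMeasurable μ A)
    ((measure_toMeasurable A).trans_lt hA)
  exact ⟨n, (subset_toMeasurable μ A).trans (hn.trans Set.inter_subset_right)⟩

theorem bddAbove_image [SigmaFinite μ] (hμ : ExhaustionsAbsorbFiniteMeasure μ)
    {f : X → ℝ} (hf : Measurable f) (hA : μ A < ⊤) : BddAbove (f '' A) := by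
  have hmono : Monotone fun n : ℕ => f ⁻¹' Set.Iic (n : ℝ) :=
    fun _ _ hij => Set.preimage_mono (Set.Iic_subset_Iic.mpr (Nat.cast_le.mpr hij))
  have hcover : ⋃ n : ℕ, f ⁻¹' Set.Iic (n : ℝ) = Set.univ :=
    Set.iUnion_eq_univ_iff.mpr fun x => exists_nat_ge (f x)
  obtain ⟨n, hn⟩ := hμ.exists_subset_of_iUnion_eq_univ
    (fun _ => hf measurableSet_Iic) hmono hcover hA
  exact ⟨n, Set.forall_mem_image.mpr hn⟩

end ExhaustionsAbsorbFiniteMeasure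

theorem L2_subset_domain_of_star_general {E : Type*} [NormedAddCommGroup E] [SigmaFinite μ]
    (hμ : ExhaustionsAbsorbFiniteMeasure μ) {f : X → E} (hf : AEStronglyMeasurable f μ)
    (p : ENNReal) (hA : μ A < ⊤) : MemLp f p (μ.restrict A) := by
  obtain ⟨g, hg, hfg⟩ := hf
  obtain ⟨C, hC⟩ := hμ.bddAbove_image hg.norm.measurable hA
  have hg_le : ∀ᵐ x ∂μ.restrict A, ‖g x‖ ≤ C :=
    (ae_restrict_iff (measurableSet_le hg.norm.measurable measurable_const)).mpr
      (ae_of_all μ (Set.forall_mem_image.mp hC))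
  have : IsFiniteMeasure (μ.restrict A) := isFiniteMeasure_restrict.mpr hA.ne
  exact (MemLp.of_bound hg.aestronglyMeasurable C hg_le).ae_eq (ae_restrict_of_ae hfg.symm)

end Star

/-- Under condition (⋆), if `u·w` is integrable then for every `A ∈ 𝒜` of finite
measure, `∫_A |μ[u·w|𝒜]|² dμ < ∞`, i.e. `L²(𝒜) ⊆ 𝒟(EM_{wu})`. -/
theorem L2_subset_domain_of_star
    {X : Type*} {m0 : MeasurableSpace X} (μ : Measure X) [SigmaFinite μ]
    (m : MeasurableSpace X) (hm : m ≤ m0) [SigmaFinite (μ.trim hm)]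
    (u w : X → ℂ) (hu : Measurable u) (hw : Measurable w)
    (hu2 : Integrable (fun x => ‖u x‖ ^ 2) μ)
    (hw2 : Integrable (fun x => ‖w x‖ ^ 2) μ)
    (hstar : ∀ Xn : ℕ → Set X, (∀ n, MeasurableSet[m0] (Xn n)) → Monotone Xn →
      (∀ n, μ (Xn n) < ⊤) → (⋃ n, Xn n) = Set.univ →
      ∀ A : Set X, MeasurableSet[m0] A → μ A < ⊤ → ∃ n, A ⊆ Xn n)
    (huw : Integrable (fun x => u x * w x) μ) :
    ∀ A : Set X, MeasurableSet[m] A → μ A < ⊤ →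
      ∫⁻ x in A, (‖(μ[fun y => u y * w y|m]) x‖₊ : ENNReal) ^ 2 ∂μ < ⊤ := by
  intro A _ hA
  have hmem : MemLp (μ[fun y => u y * w y|m]) 2 (μ.restrict A) :=
    L2_subset_domain_of_star_general hstar
      (stronglyMeasurable_condExp.mono hm).aestronglyMeasurable 2 hA
  simpa [enorm_eq_nnnorm] using
    lintegral_rpow_enorm_lt_top_of_eLpNorm_lt_top two_ne_zero ENNReal.ofNat_ne_top
      hmem.eLpNorm_lt_top
end

section
/- For every f ∈ L²(μ) such that u·f, conj(w)·(T f) and u·(T†(T f)) are μ-integrable, one has the first Penrose identity T(T†(T f)) = T f μ-almost everywhere; explicitly, w·μ[u·( χ_S·(e_u·e_w)⁻¹·conj(u)·μ[conj(w)·(w·μ[u·f|𝒜])|𝒜] )|𝒜] = w·μ[u·f|𝒜] μ-a.e. -/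
/-!
Write `e_v = E(|v|² | 𝒜)` and let `T* f = ū · E(w̄ f | 𝒜)` be the formal adjoint of `T`. Pulling
`𝒜`-measurable factors out of the conditional expectation gives `T (c · T* (T f)) = e_u c e_w · T f`
for every `𝒜`-measurable `c`. Moreover `E(u f | 𝒜)` vanishes where `e_u` does and `w` vanishes where
`e_w` does, so `T f` is supported on `S` and `c = (e_u e_w)⁻¹` makes the factor disappear.
-/

open MeasureTheory

section

variable {X 𝕜 E : Type*} {m0 : MeasurableSpace X} {m : MeasurableSpace X} {μ : Measure[m0] X}
  [RCLike 𝕜] [NormedAddCommGroup E] [NormedSpace ℝ E] [NormedSpace 𝕜 E]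

/-- The conditional second moment `e_v = E(‖v‖² | m)`. -/
noncomputable def condNormSq (μ : Measure[m0] X) (m : MeasurableSpace X) (v : X → 𝕜) : X → ℝ :=
  μ[fun x ↦ ‖v x‖ ^ 2 | m]

/-- The weighted conditional type operator `T f = w · E(u f | m)`, acting on vector-valued `f`.
Exchanging `(u, w)` for `(star w, star u)` yields its formal adjoint. -/
noncomputable def weightedCondExp (μ : Measure[m0] X) (m : MeasurableSpace X) (u w : X → 𝕜)
    (f : X → E) : X → E :=
  w • μ[u • f | m]

/-- The Moore–Penrose candidate `T† f = χ_S (e_u e_w)⁻¹ · ū · E(w̄ f | m)` for the operator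
`weightedCondExp μ m u w`. Since `0⁻¹ = 0`, the factor `χ_S` is already part of `(e_u e_w)⁻¹`. -/
noncomputable def weightedCondExpPinv (μ : Measure[m0] X) (m : MeasurableSpace X) (u w : X → 𝕜)
    (f : X → E) : X → E :=
  (condNormSq μ m u * condNormSq μ m w)⁻¹ • weightedCondExp μ m (star w) (star u) f

lemma ae_eq_zero_of_condExp_eq_zero {f : X → ℝ} (hm : m ≤ m0) [SigmaFinite (μ.trim hm)]
    (hf_nonneg : 0 ≤ᵐ[μ] f) (hf : Integrable f μ) : ∀ᵐ x ∂μ, μ[f | m] x = 0 → f x = 0 := by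
  let s := {x | μ[f | m] x = 0}
  have hs : MeasurableSet[m] s :=
    stronglyMeasurable_condExp.measurable (measurableSet_singleton 0)
  have integral_zero : ∫ x in s, f x ∂μ = 0 := by
    rw [← setIntegral_condExp hm hf hs]
    exact setIntegral_eq_zero_of_forall_eq_zero fun _ hx ↦ hx
  have ae_eq_zero_on_s : f =ᵐ[μ.restrict s] 0 :=
    (setIntegral_eq_zero_iff_of_nonneg_ae (ae_restrict_of_ae hf_nonneg) hf.integrableOn).1
      integral_zero
  exact (ae_restrict_iff' (hm _ hs)).1 ae_eq_zero_on_s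

lemma ae_eq_zero_of_condNormSq_eq_zero {v : X → 𝕜} (hm : m ≤ m0) [SigmaFinite (μ.trim hm)]
    (hv : Integrable (fun x ↦ ‖v x‖ ^ 2) μ) : ∀ᵐ x ∂μ, condNormSq μ m v x = 0 → v x = 0 := by
  filter_upwards [ae_eq_zero_of_condExp_eq_zero hm (ae_of_all _ fun x ↦ sq_nonneg ‖v x‖) hv]
    with x hx h0
  simpa using hx h0

lemma star_smul_smul_eq_norm_sq_smul [IsScalarTower ℝ 𝕜 E] (a : 𝕜) (x : E) :
    star a • a • x = ‖a‖ ^ 2 • x := by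
  rw [smul_smul, RCLike.star_def, RCLike.conj_mul, ← RCLike.ofReal_pow,
    RCLike.real_smul_eq_coe_smul (K := 𝕜)]

variable [CompleteSpace E]

lemma condExp_smul_ae_eq_zero_of_condNormSq_eq_zero {v : X → 𝕜} (hm : m ≤ m0)
    [SigmaFinite (μ.trim hm)] (hv : Integrable (fun x ↦ ‖v x‖ ^ 2) μ) (f : X → E) :
    ∀ᵐ x ∂μ, condNormSq μ m v x = 0 → μ[v • f | m] x = 0 := by
  have hs : MeasurableSet[m] {x | condNormSq μ m v x = 0} :=
    stronglyMeasurable_condExp.measurable (measurableSet_singleton 0)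
  have smul_ae_eq_zero : v • f =ᵐ[μ.restrict {x | condNormSq μ m v x = 0}] 0 := by
    refine (ae_restrict_iff' (hm _ hs)).2 ?_
    filter_upwards [ae_eq_zero_of_condNormSq_eq_zero hm hv] with x hx h0
    simp [hx h0]
  exact (ae_restrict_iff' (hm _ hs)).1 (condExp_ae_eq_restrict_zero hs smul_ae_eq_zero)

lemma weightedCondExp_ae_eq_zero_of_condNormSq_mul_eq_zero {u w : X → 𝕜} (hm : m ≤ m0)
    [SigmaFinite (μ.trim hm)] (hu : Integrable (fun x ↦ ‖u x‖ ^ 2) μ)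
    (hw : Integrable (fun x ↦ ‖w x‖ ^ 2) μ) (f : X → E) :
    ∀ᵐ x ∂μ, condNormSq μ m u x * condNormSq μ m w x = 0 → weightedCondExp μ m u w f x = 0 := by
  filter_upwards [condExp_smul_ae_eq_zero_of_condNormSq_eq_zero hm hu f,
    ae_eq_zero_of_condNormSq_eq_zero hm hw] with x hux hwx h
  rcases mul_eq_zero.1 h with h | h
  · simp [weightedCondExp, hux h]
  · simp [weightedCondExp, hwx h]

variable [IsScalarTower ℝ 𝕜 E]

lemma condExp_star_smul_smul {v : X → 𝕜} {g : X → E} (hv : Integrable (fun x ↦ ‖v x‖ ^ 2) μ)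
    (hg : AEStronglyMeasurable[m] g μ) (hvg : Integrable (star v • v • g) μ) :
    μ[star v • v • g | m] =ᵐ[μ] condNormSq μ m v • g := by
  have norm_sq_form : star v • v • g = (fun x ↦ ‖v x‖ ^ 2) • g :=
    funext fun x ↦ star_smul_smul_eq_norm_sq_smul (v x) (g x)
  rw [norm_sq_form] at hvg ⊢
  exact condExp_smul_of_aestronglyMeasurable_right hv hvg hg

lemma weightedCondExp_smul_adjoint_weightedCondExp {u w : X → 𝕜} {f : X → E} {c : X → ℝ}
    (hu : Integrable (fun x ↦ ‖u x‖ ^ 2) μ) (hw : Integrable (fun x ↦ ‖w x‖ ^ 2) μ)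
    (hc : AEStronglyMeasurable[m] c μ)
    (hwT : Integrable (star w • weightedCondExp μ m u w f) μ)
    (huT : Integrable
      (u • c • weightedCondExp μ m (star w) (star u) (weightedCondExp μ m u w f)) μ) :
    weightedCondExp μ m u w
        (c • weightedCondExp μ m (star w) (star u) (weightedCondExp μ m u w f)) =ᵐ[μ]
      (condNormSq μ m u * c * condNormSq μ m w) • weightedCondExp μ m u w f := by
  have inner_pull_out : μ[star w • weightedCondExp μ m u w f | m] =ᵐ[μ]
      condNormSq μ m w • μ[u • f | m] :=
    condExp_star_smul_smul hw stronglyMeasurable_condExp.aestronglyMeasurable hwT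
  have adjoint_form : u • c • weightedCondExp μ m (star w) (star u) (weightedCondExp μ m u w f) =
      star u • u • c • μ[star w • weightedCondExp μ m u w f | m] := by
    ext x
    simp only [weightedCondExp, Pi.smul_apply']
    rw [smul_comm (c x), smul_comm (u x)]
  have outer_pull_out : μ[u • c •
        weightedCondExp μ m (star w) (star u) (weightedCondExp μ m u w f) | m] =ᵐ[μ]
      condNormSq μ m u • c • μ[star w • weightedCondExp μ m u w f | m] := by
    rw [adjoint_form] at huT ⊢
    exact condExp_star_smul_smul hu
      (hc.smul stronglyMeasurable_condExp.aestronglyMeasurable) huT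
  filter_upwards [inner_pull_out, outer_pull_out] with x hin hout
  calc w x • μ[u • c • weightedCondExp μ m (star w) (star u) (weightedCondExp μ m u w f) | m] x
      = w x • condNormSq μ m u x • c x • condNormSq μ m w x • μ[u • f | m] x := by
        rw [hout, Pi.smul_apply', Pi.smul_apply', hin, Pi.smul_apply']
    _ = (condNormSq μ m u x * c x * condNormSq μ m w x) • w x • μ[u • f | m] x := by
        simp only [smul_comm (w x), mul_smul]

theorem WCT_penrose_one_general (hm : m ≤ m0) [SigmaFinite (μ.trim hm)] {u w : X → 𝕜} {f : X → E}
    (hu : Integrable (fun x ↦ ‖u x‖ ^ 2) μ) (hw : Integrable (fun x ↦ ‖w x‖ ^ 2) μ)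
    (_huf : Integrable (u • f) μ)
    (hwT : Integrable (star w • weightedCondExp μ m u w f) μ)
    (huT : Integrable (u • weightedCondExpPinv μ m u w (weightedCondExp μ m u w f)) μ) :
    weightedCondExp μ m u w (weightedCondExpPinv μ m u w (weightedCondExp μ m u w f)) =ᵐ[μ]
      weightedCondExp μ m u w f := by
  have hc : StronglyMeasurable[m] (condNormSq μ m u * condNormSq μ m w)⁻¹ :=
    (stronglyMeasurable_condExp.measurable.mul
      stronglyMeasurable_condExp.measurable).inv.stronglyMeasurable
  filter_upwards [
    weightedCondExp_smul_adjoint_weightedCondExp hu hw hc.aestronglyMeasurable hwT huT,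
    weightedCondExp_ae_eq_zero_of_condNormSq_mul_eq_zero hm hu hw f] with x hx hzero
  refine hx.trans ?_
  simp only [Pi.smul_apply', Pi.mul_apply, Pi.inv_apply]
  by_cases h : condNormSq μ m u x * condNormSq μ m w x = 0
  · simp [hzero h]
  · rw [mul_right_comm, mul_inv_cancel₀ h, one_smul]

end

lemma indicator_ne_zero_inv_mul {X G₀ : Type*} [GroupWithZero G₀] (a b : X → G₀) :
    {x | a x ≠ 0 ∧ b x ≠ 0}.indicator (fun x ↦ (a x * b x)⁻¹) = (a * b)⁻¹ :=
  Set.indicator_eq_self.2 fun x hx ↦ by simpa [and_comm] using hx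

/-- First Penrose identity for the WCT operator: `T (T† (T f)) = T f` μ-a.e. -/
theorem WCT_penrose_one
    {X : Type*} {m0 : MeasurableSpace X} (μ : Measure X) [SigmaFinite μ]
    (m : MeasurableSpace X) (hm : m ≤ m0) [SigmaFinite (μ.trim hm)]
    (u w : X → ℂ) (hu : Measurable u) (hw : Measurable w)
    (hu2 : Integrable (fun x => ‖u x‖ ^ 2) μ)
    (hw2 : Integrable (fun x => ‖w x‖ ^ 2) μ)
    (eu ew : X → ℝ)
    (heu : eu = μ[fun x => ‖u x‖ ^ 2|m]) (hew : ew = μ[fun x => ‖w x‖ ^ 2|m])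
    (T Td : (X → ℂ) → (X → ℂ))
    (hT : ∀ f, T f = fun x => w x * (μ[fun y => u y * f y|m]) x)
    (hTd : ∀ f, Td f = fun x =>
      (({x | eu x ≠ 0 ∧ ew x ≠ 0}.indicator (fun y => (eu y * ew y)⁻¹) x : ℝ) : ℂ) *
        (starRingEnd ℂ) (u x) * (μ[fun y => (starRingEnd ℂ) (w y) * f y|m]) x)
    (f : X → ℂ) (hf : MemLp f 2 μ)
    (h1 : Integrable (fun x => u x * f x) μ)
    (h2 : Integrable (fun x => (starRingEnd ℂ) (w x) * T f x) μ)
    (h3 : Integrable (fun x => u x * Td (T f) x) μ) :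
    ∀ᵐ x ∂μ, T (Td (T f)) x = T f x := by
  obtain rfl : T = weightedCondExp μ m u w := funext hT
  obtain rfl : Td = weightedCondExpPinv μ m u w := by
    funext g x
    simp only [hTd, indicator_ne_zero_inv_mul, heu, hew, ← Complex.real_smul,
      smul_mul_assoc]
    rfl
  exact WCT_penrose_one_general hm hu2 hw2 h1 h2 h3
end

section
/- For every f ∈ L²(μ) such that conj(w)·f, u·(T† f) and conj(w)·(T(T† f)) are μ-integrable, one has the second Penrose identity T†(T(T† f)) = T† f μ-almost everywhere. -/
open MeasureTheory

/-!
`T†` is again of weighted conditional type, with symbols `conj w` and `(e_u e_w)⁻¹ conj u`, and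
pulling the `𝒜`-measurable factors out of the conditional expectations gives
`μ[u · T† f|𝒜] = e_u (e_u e_w)⁻¹ μ[conj w · f|𝒜]` and `μ[conj w · T g|𝒜] = e_w μ[u · g|𝒜]`.
Hence `T† T T† f` differs from `T† f` only in that the scalar function `a⁻¹` with `a = e_u e_w` is
replaced by `a⁻¹ a a⁻¹`, and the identity `a⁻¹ a a⁻¹ = a⁻¹` also holds where `a = 0`.
-/

namespace WCT

open scoped ComplexConjugate

variable {X 𝕜 : Type*} [RCLike 𝕜]

section Definitions

variable (m : MeasurableSpace X) {m0 : MeasurableSpace X} (μ : Measure X)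

/-- The function `e_u = μ[|u|²|m]`. -/
noncomputable def condSq (u : X → 𝕜) : X → ℝ :=
  μ[fun x => ‖u x‖ ^ 2|m]

/-- The weighted conditional type operator `T f = w · μ[u · f|m]`. -/
noncomputable def op (u w f : X → 𝕜) : X → 𝕜 :=
  fun x => w x * (μ[fun y => u y * f y|m]) x

/-- The Moore–Penrose inverse candidate `T† f = χ_S · (e_u e_w)⁻¹ · conj u · μ[conj w · f|m]` of
`op m μ u w`. The factor `χ_S` is supplied by the convention `0⁻¹ = 0`. -/
noncomputable def pinv (u w f : X → 𝕜) : X → 𝕜 :=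
  fun x => (((condSq m μ u x * condSq m μ w x)⁻¹ : ℝ) : 𝕜) * conj (u x) *
    (μ[fun y => conj (w y) * f y|m]) x

end Definitions

lemma indicator_inv_mul {α M₀ : Type*} [GroupWithZero M₀] (a b : α → M₀) :
    {x | a x ≠ 0 ∧ b x ≠ 0}.indicator (fun x => (a x * b x)⁻¹) = fun x => (a x * b x)⁻¹ := by
  refine Set.indicator_eq_self.mpr fun x hx => ?_
  simpa only [Function.mem_support, ne_eq, inv_eq_zero, mul_eq_zero, not_or, Set.mem_ofPred_eq]
    using hx

variable {m m0 : MeasurableSpace X} {μ : Measure X} {u w f g h : X → 𝕜}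

lemma stronglyMeasurable_condSq : StronglyMeasurable[m] (condSq m μ u) :=
  stronglyMeasurable_condExp

lemma condExp_mul_conj_mul (hg : Integrable (fun x => ‖g x‖ ^ 2) μ) (hh : StronglyMeasurable[m] h)
    (hgh : Integrable (fun x => g x * conj (g x) * h x) μ) :
    μ[fun x => g x * conj (g x) * h x|m] =ᵐ[μ] fun x => (condSq m μ g x : 𝕜) * h x := by
  have smul_eq : (fun x => g x * conj (g x) * h x) = fun x => ‖g x‖ ^ 2 • h x := by
    ext x
    rw [RCLike.mul_conj, RCLike.real_smul_eq_coe_mul, RCLike.ofReal_pow]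
  rw [smul_eq] at hgh ⊢
  simpa only [condSq, Pi.smul_def', RCLike.real_smul_eq_coe_mul] using
    condExp_smul_of_aestronglyMeasurable_right hg hgh hh.aestronglyMeasurable

lemma condExp_conj_mul_op (hw : Integrable (fun x => ‖w x‖ ^ 2) μ)
    (hwT : Integrable (fun x => conj (w x) * op m μ u w f x) μ) :
    μ[fun x => conj (w x) * op m μ u w f x|m] =ᵐ[μ]
      fun x => (condSq m μ w x : 𝕜) * (μ[fun y => u y * f y|m]) x := by
  have regroup : (fun x => conj (w x) * op m μ u w f x) =
      fun x => w x * conj (w x) * (μ[fun y => u y * f y|m]) x := by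
    ext x
    rw [op]
    ring
  rw [regroup] at hwT ⊢
  exact condExp_mul_conj_mul hw stronglyMeasurable_condExp hwT

lemma condExp_mul_pinv (hu : Integrable (fun x => ‖u x‖ ^ 2) μ)
    (huTd : Integrable (fun x => u x * pinv m μ u w f x) μ) :
    μ[fun x => u x * pinv m μ u w f x|m] =ᵐ[μ]
      fun x => (condSq m μ u x : 𝕜) * ((((condSq m μ u x * condSq m μ w x)⁻¹ : ℝ) : 𝕜) *
        (μ[fun y => conj (w y) * f y|m]) x) := by
  have regroup : (fun x => u x * pinv m μ u w f x) = fun x => u x * conj (u x) *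
      ((((condSq m μ u x * condSq m μ w x)⁻¹ : ℝ) : 𝕜) * (μ[fun y => conj (w y) * f y|m]) x) := by
    ext x
    rw [pinv]
    ring
  have inv_meas : StronglyMeasurable[m] fun x => (condSq m μ u x * condSq m μ w x)⁻¹ :=
    (stronglyMeasurable_condSq.mul stronglyMeasurable_condSq).measurable.inv.stronglyMeasurable
  rw [regroup] at huTd ⊢
  exact condExp_mul_conj_mul hu
    ((RCLike.continuous_ofReal.comp_stronglyMeasurable inv_meas).mul stronglyMeasurable_condExp)
    huTd

end WCT

open scoped ComplexConjugate in
theorem WCT_penrose_two_general {X 𝕜 : Type*} [RCLike 𝕜] {m m0 : MeasurableSpace X}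
    {μ : Measure X} (hm : m ≤ m0) [SigmaFinite (μ.trim hm)] {u w f : X → 𝕜}
    (hu : Integrable (fun x => ‖u x‖ ^ 2) μ) (hw : Integrable (fun x => ‖w x‖ ^ 2) μ)
    (_hwf : Integrable (fun x => conj (w x) * f x) μ)
    (huTd : Integrable (fun x => u x * WCT.pinv m μ u w f x) μ)
    (hwT : Integrable (fun x => conj (w x) * WCT.op m μ u w (WCT.pinv m μ u w f) x) μ) :
    WCT.pinv m μ u w (WCT.op m μ u w (WCT.pinv m μ u w f)) =ᵐ[μ] WCT.pinv m μ u w f := by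
  filter_upwards [WCT.condExp_mul_pinv hu huTd, WCT.condExp_conj_mul_op hw hwT] with x hx_pinv hx_op
  let a : ℝ := WCT.condSq m μ u x * WCT.condSq m μ w x
  let G : 𝕜 := (μ[fun y => conj (w y) * f y|m]) x
  calc WCT.pinv m μ u w (WCT.op m μ u w (WCT.pinv m μ u w f)) x
    _ = ((a⁻¹ : ℝ) : 𝕜) * conj (u x) *
          (WCT.condSq m μ w x * (WCT.condSq m μ u x * (((a⁻¹ : ℝ) : 𝕜) * G))) := by
      rw [WCT.pinv, hx_op, hx_pinv]
    _ = ((a⁻¹ * a * a⁻¹ : ℝ) : 𝕜) * conj (u x) * G := by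
      push_cast [a]
      ring
    _ = ((a⁻¹ : ℝ) : 𝕜) * conj (u x) * G := by
      rw [show a⁻¹ * a * a⁻¹ = a⁻¹ by simpa only [inv_inv] using mul_inv_mul_cancel a⁻¹]
    _ = WCT.pinv m μ u w f x := rfl

/-- Second Penrose identity for the WCT operator: `T† (T (T† f)) = T† f` μ-a.e. -/
theorem WCT_penrose_two
    {X : Type*} {m0 : MeasurableSpace X} (μ : Measure X) [SigmaFinite μ]
    (m : MeasurableSpace X) (hm : m ≤ m0) [SigmaFinite (μ.trim hm)]
    (u w : X → ℂ) (hu : Measurable u) (hw : Measurable w)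
    (hu2 : Integrable (fun x => ‖u x‖ ^ 2) μ)
    (hw2 : Integrable (fun x => ‖w x‖ ^ 2) μ)
    (eu ew : X → ℝ)
    (heu : eu = μ[fun x => ‖u x‖ ^ 2|m]) (hew : ew = μ[fun x => ‖w x‖ ^ 2|m])
    (T Td : (X → ℂ) → (X → ℂ))
    (hT : ∀ f, T f = fun x => w x * (μ[fun y => u y * f y|m]) x)
    (hTd : ∀ f, Td f = fun x =>
      (({x | eu x ≠ 0 ∧ ew x ≠ 0}.indicator (fun y => (eu y * ew y)⁻¹) x : ℝ) : ℂ) *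
        (starRingEnd ℂ) (u x) * (μ[fun y => (starRingEnd ℂ) (w y) * f y|m]) x)
    (f : X → ℂ) (hf : MemLp f 2 μ)
    (h1 : Integrable (fun x => (starRingEnd ℂ) (w x) * f x) μ)
    (h2 : Integrable (fun x => u x * Td f x) μ)
    (h3 : Integrable (fun x => (starRingEnd ℂ) (w x) * T (Td f) x) μ) :
    ∀ᵐ x ∂μ, Td (T (Td f)) x = Td f x := by
  subst heu hew
  obtain rfl : T = WCT.op m μ u w := funext hT
  obtain rfl : Td = WCT.pinv m μ u w := by
    ext g x
    rw [hTd, WCT.indicator_inv_mul]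
    rfl
  exact WCT_penrose_two_general hm hu2 hw2 h1 h2 h3
end

section
/- Let λ > 0 and set t_λ = (e_u·e_w + λ)⁻¹ and P_λ f = λ⁻¹·f − (e_w·conj(u))/(λ·(e_w·e_u + λ))·μ[u·f|𝒜]. Then for every f ∈ L²(μ) such that u·f and u·(P_λ f) are μ-integrable, one has T(P_λ f) = t_λ·(T f) μ-almost everywhere, i.e. w·μ[u·(P_λ f)|𝒜] = t_λ·w·μ[u·f|𝒜] μ-a.e. -/
open MeasureTheory

/-!
The operator `P_λ` is a conditional Sherman–Morrison formula for `(λ + T*T)⁻¹`: `T*T` is the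
conditional rank-one operator `f ↦ e_w · conj u · μ[u · f|𝒜]`. Hence `P_λ f` is `λ⁻¹ f` minus
`c · conj u · μ[u · f|𝒜]` with an `𝒜`-measurable coefficient `c = e_w / (λ (e_w e_u + λ))`.
Pulling the `𝒜`-measurable factor `c · μ[u · f|𝒜]` out of the conditional expectation shows that `T`
maps the subtracted term to `c e_u · T f`, and `λ⁻¹ - c e_u = (e_u e_w + λ)⁻¹`.
-/

section WeightedConditionalType

variable {X 𝕜 : Type*} [RCLike 𝕜] {m m0 : MeasurableSpace X} {μ : Measure X}

/-- The weighted conditional type operator `f ↦ w · μ[u · f|m]`, as an operator on functions (not on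
`L²` classes). It is `0` at every `f` with `u · f` not integrable. -/
noncomputable def wctOp (m : MeasurableSpace X) {_ : MeasurableSpace X} (μ : Measure X)
    (w u f : X → 𝕜) : X → 𝕜 :=
  fun x => w x * (μ[fun y => u y * f y | m]) x

/-- The Sherman–Morrison expression for the inverse of `lam + wctOp m μ (v * g) u`, where `v` is
`m`-measurable and `e` is a version of `μ[u * g|m]`. The operator `P_λ` is the case `g = conj u`,
`v = e_w`, `e = e_u`. The function `e` is a parameter so that any version can be used. -/
noncomputable def wctResolvent (m : MeasurableSpace X) {_ : MeasurableSpace X} (μ : Measure X)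
    (u g v e : X → 𝕜) (lam : 𝕜) (f : X → 𝕜) : X → 𝕜 :=
  lam⁻¹ • f - wctOp m μ (fun x => v x / (lam * (v x * e x + lam)) * g x) u f

lemma wctOp_smul (w u : X → 𝕜) (a : 𝕜) (f : X → 𝕜) :
    wctOp m μ w u (a • f) =ᵐ[μ] a • wctOp m μ w u f := by
  have hcomm : (fun y => u y * (a • f) y) = a • fun y => u y * f y :=
    funext fun y => mul_left_comm (u y) a (f y)
  filter_upwards [condExp_smul (μ := μ) a (fun y => u y * f y) m] with x hx
  rw [wctOp, hcomm, hx]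
  exact mul_left_comm (w x) a _

lemma wctOp_sub (w : X → 𝕜) {u f h : X → 𝕜} (huf : Integrable (fun x => u x * f x) μ)
    (huh : Integrable (fun x => u x * h x) μ) :
    wctOp m μ w u (f - h) =ᵐ[μ] wctOp m μ w u f - wctOp m μ w u h := by
  have hdistrib : (fun y => u y * (f - h) y) = (fun y => u y * f y) - fun y => u y * h y :=
    funext fun y => mul_sub (u y) (f y) (h y)
  filter_upwards [condExp_sub huf huh m] with x hx
  rw [wctOp, hdistrib, hx]
  exact mul_sub (w x) _ _

lemma wctOp_wctOp (w : X → 𝕜) {u u' g c f : X → 𝕜} (hc : AEStronglyMeasurable[m] c μ)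
    (hug : Integrable (fun x => u x * g x) μ)
    (hint : Integrable (fun x => u x * wctOp m μ (fun y => c y * g y) u' f x) μ) :
    wctOp m μ w u (wctOp m μ (fun x => c x * g x) u' f) =ᵐ[μ]
      fun x => c x * (μ[fun y => u y * g y | m]) x * wctOp m μ w u' f x := by
  set E : X → 𝕜 := μ[fun y => u' y * f y | m] with hE
  have hfactor : (fun x => u x * wctOp m μ (fun y => c y * g y) u' f x) =
      fun x => (c x * E x) * (u x * g x) := by
    funext x
    simp only [wctOp, ← hE]
    ring
  have hcE : AEStronglyMeasurable[m] (fun x => c x * E x) μ :=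
    hc.mul stronglyMeasurable_condExp.aestronglyMeasurable
  have hpull : μ[fun x => (c x * E x) * (u x * g x) | m] =ᵐ[μ]
      fun x => (c x * E x) * (μ[fun y => u y * g y | m]) x :=
    condExp_bilin_of_aestronglyMeasurable_left (.mul ℝ 𝕜) hcE (hfactor ▸ hint) hug
  filter_upwards [hpull] with x hx
  rw [wctOp, hfactor, hx, wctOp]
  ring

lemma inv_sub_div_mul_eq_inv {K : Type*} [Field K] {a b lam : K} (hlam : lam ≠ 0)
    (hne : a * b + lam ≠ 0) :
    lam⁻¹ - a / (lam * (a * b + lam)) * b = (a * b + lam)⁻¹ := by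
  field_simp
  ring

theorem WCT_T_comp_P_lambda_general (w : X → 𝕜) {u g v e f : X → 𝕜} {lam : 𝕜}
    (hug : Integrable (fun x => u x * g x) μ) (hv : AEStronglyMeasurable[m] v μ)
    (he : e =ᵐ[μ] μ[fun x => u x * g x | m]) (hlam : lam ≠ 0)
    (hne : ∀ᵐ x ∂μ, v x * e x + lam ≠ 0) (huf : Integrable (fun x => u x * f x) μ)
    (huPf : Integrable (fun x => u x * wctResolvent m μ u g v e lam f x) μ) :
    wctOp m μ w u (wctResolvent m μ u g v e lam f) =ᵐ[μ]
      fun x => (v x * e x + lam)⁻¹ * wctOp m μ w u f x := by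
  set c : X → 𝕜 := fun x => v x / (lam * (v x * e x + lam))
  set R : X → 𝕜 := wctOp m μ (fun x => c x * g x) u f
  have hem : AEStronglyMeasurable[m] e μ :=
    stronglyMeasurable_condExp.aestronglyMeasurable.congr he.symm
  have hc : AEStronglyMeasurable[m] c μ :=
    hv.div₀ (((hv.mul hem).add_const lam).const_mul lam)
  have huf_smul : Integrable (fun x => u x * (lam⁻¹ • f) x) μ := by
    simpa only [Pi.smul_apply, smul_eq_mul, mul_left_comm] using huf.const_mul lam⁻¹
  have huR : Integrable (fun x => u x * R x) μ := by
    refine (huf_smul.sub huPf).congr (.of_forall fun x => ?_)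
    simp only [wctResolvent, Pi.sub_apply, ← mul_sub, sub_sub_cancel, R, c]
  filter_upwards [wctOp_sub (m := m) w huf_smul huR, wctOp_smul (m := m) (μ := μ) w u lam⁻¹ f,
    wctOp_wctOp w hc hug huR, he, hne] with x hsub hsmul hcomp hex hnex
  calc wctOp m μ w u (lam⁻¹ • f - R) x
      = lam⁻¹ * wctOp m μ w u f x - c x * e x * wctOp m μ w u f x := by
        rw [hsub, Pi.sub_apply, hsmul, hcomp, ← hex, Pi.smul_apply, smul_eq_mul]
    _ = (v x * e x + lam)⁻¹ * wctOp m μ w u f x := by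
        rw [← sub_mul, inv_sub_div_mul_eq_inv hlam hnex]

lemma integrable_mul_conj {u : X → 𝕜} (hu2 : Integrable (fun x => ‖u x‖ ^ 2) μ) :
    Integrable (fun x => u x * starRingEnd 𝕜 (u x)) μ := by
  simpa only [RCLike.mul_conj, RCLike.ofReal_pow] using hu2.ofReal (𝕜 := 𝕜)

lemma ofReal_condExp_norm_sq {u : X → 𝕜} (hu2 : Integrable (fun x => ‖u x‖ ^ 2) μ) :
    (fun x => ((μ[fun y => ‖u y‖ ^ 2 | m]) x : 𝕜)) =ᵐ[μ]
      μ[fun x => u x * starRingEnd 𝕜 (u x) | m] := by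
  simpa only [RCLike.mul_conj, Function.comp_def, RCLike.ofRealCLM_apply, RCLike.ofReal_pow]
    using (RCLike.ofRealCLM (K := 𝕜)).comp_condExp_comm hu2 (m := m)

end WeightedConditionalType

/-- For `λ > 0`, `T ∘ P_λ = M_{t_λ} ∘ T` a.e., where `t_λ = (e_u·e_w + λ)⁻¹` and
`P_λ f = λ⁻¹·f − (e_w·conj(u))/(λ·(e_w·e_u + λ))·μ[u·f|𝒜]`. -/
theorem WCT_T_comp_P_lambda
    {X : Type*} {m0 : MeasurableSpace X} (μ : Measure X) [SigmaFinite μ]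
    (m : MeasurableSpace X) (hm : m ≤ m0) [SigmaFinite (μ.trim hm)]
    (u w : X → ℂ) (hu : Measurable u) (hw : Measurable w)
    (hu2 : Integrable (fun x => ‖u x‖ ^ 2) μ)
    (hw2 : Integrable (fun x => ‖w x‖ ^ 2) μ)
    (eu ew : X → ℝ)
    (heu : eu = μ[fun x => ‖u x‖ ^ 2|m]) (hew : ew = μ[fun x => ‖w x‖ ^ 2|m])
    (lam : ℝ) (hlam : 0 < lam)
    (tlam : X → ℝ) (htlam : tlam = fun x => (eu x * ew x + lam)⁻¹)
    (Plam : (X → ℂ) → (X → ℂ))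
    (hP : ∀ f, Plam f = fun x => (lam⁻¹ : ℝ) * f x -
      ((ew x / (lam * (ew x * eu x + lam)) : ℝ) : ℂ) * (starRingEnd ℂ) (u x) *
        (μ[fun y => u y * f y|m]) x)
    (f : X → ℂ) (hf : MemLp f 2 μ)
    (huf : Integrable (fun x => u x * f x) μ)
    (huPf : Integrable (fun x => u x * Plam f x) μ) :
    ∀ᵐ x ∂μ, w x * (μ[fun y => u y * Plam f y|m]) x =
      (tlam x : ℂ) * w x * (μ[fun y => u y * f y|m]) x := by
  have hv : AEStronglyMeasurable[m] (fun x => (ew x : ℂ)) μ :=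
    (Complex.continuous_ofReal.comp_stronglyMeasurable
      (hew ▸ stronglyMeasurable_condExp)).aestronglyMeasurable
  have he : (fun x => (eu x : ℂ)) =ᵐ[μ] μ[fun x => u x * starRingEnd ℂ (u x) | m] :=
    heu ▸ ofReal_condExp_norm_sq hu2
  have heu0 : 0 ≤ᵐ[μ] eu := heu ▸ condExp_nonneg (.of_forall fun x => sq_nonneg ‖u x‖)
  have hew0 : 0 ≤ᵐ[μ] ew := hew ▸ condExp_nonneg (.of_forall fun x => sq_nonneg ‖w x‖)
  have hne : ∀ᵐ x ∂μ, (ew x : ℂ) * eu x + lam ≠ 0 := by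
    filter_upwards [heu0, hew0] with x hu0 hw0
    exact_mod_cast (add_pos_of_nonneg_of_pos (mul_nonneg hw0 hu0) hlam).ne'
  have hPf : Plam f = wctResolvent m μ u (fun x => starRingEnd ℂ (u x))
      (fun x => ew x) (fun x => eu x) lam f := by
    funext x
    simp [hP, wctResolvent, wctOp]
  rw [hPf] at huPf ⊢
  filter_upwards [WCT_T_comp_P_lambda_general w (integrable_mul_conj hu2) hv he
    (by exact_mod_cast hlam.ne') hne huf huPf] with x hx
  simpa [wctOp, htlam, mul_assoc, mul_comm (eu x : ℂ)] using hx
end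

section
/- Let H be a complex Hilbert space and T : H →ₗ.[ℂ] H a densely defined unbounded operator (LinearPMap) whose graph is closed. Then I + T*T is surjective in the following sense: for every h ∈ H there exists x in the domain of T such that T x lies in the domain of the adjoint T* and x + T*(T x) = h. -/
open MeasureTheory

/-!
Inside the Hilbert sum `E ⊕ F`, the orthogonal complement of the graph of `T` consists of the
pairs `(T† y, -y)`. The graph is closed, so every `(u, v)` decomposes orthogonally as
`(x, T x) + (T† y, -y)`. For `v = 0` the second coordinate forces `y = T x`, and the first one
becomes `u = x + T† (T x)`.
-/

section

variable {𝕜 E F : Type*} [RCLike 𝕜]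
  [NormedAddCommGroup E] [InnerProductSpace 𝕜 E]
  [NormedAddCommGroup F] [InnerProductSpace 𝕜 F]

/-- A linear relation `g` between `E` and `F`, viewed as a subspace of the Hilbert sum of `E` and
`F`. The type `E × F` carries the sup norm, so orthogonality needs `WithLp 2 (E × F)`. -/
def l2Submodule (g : Submodule 𝕜 (E × F)) : Submodule 𝕜 (WithLp 2 (E × F)) :=
  g.comap (WithLp.linearEquiv 2 𝕜 (E × F)).toLinearMap

theorem isClosed_l2Submodule {g : Submodule 𝕜 (E × F)} (hg : IsClosed (g : Set (E × F))) :
    IsClosed (l2Submodule g : Set (WithLp 2 (E × F))) :=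
  hg.preimage (WithLp.prod_continuous_ofLp 2 E F)

theorem mem_orthogonal_l2Submodule_iff {g : Submodule 𝕜 (E × F)} {p : WithLp 2 (E × F)} :
    p ∈ (l2Submodule g)ᗮ ↔ (-p.snd, p.fst) ∈ g.adjoint := by
  have inner_eq_zero_iff (a : E) (b : F) :
      inner 𝕜 (WithLp.toLp 2 (a, b)) p = 0 ↔ inner 𝕜 b (-p.snd) - inner 𝕜 a p.fst = 0 := by
    rw [WithLp.prod_inner_apply, inner_neg_right, ← neg_add', neg_eq_zero, add_comm]
    rfl
  rw [Submodule.mem_orthogonal, Submodule.mem_adjoint_iff]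
  exact ⟨fun hp a b hab ↦ (inner_eq_zero_iff a b).1 (hp _ hab),
    fun hp q hq ↦ (inner_eq_zero_iff q.fst q.snd).2 (hp _ _ hq)⟩

variable [CompleteSpace E] [CompleteSpace F]

theorem exists_mem_exists_mem_adjoint_of_isClosed {g : Submodule 𝕜 (E × F)}
    (hg : IsClosed (g : Set (E × F))) (u : E) (v : F) :
    ∃ p ∈ g, ∃ q ∈ g.adjoint, p.1 + q.2 = u ∧ p.2 - q.1 = v := by
  have : CompleteSpace (l2Submodule g) := (isClosed_l2Submodule hg).completeSpace_coe
  obtain ⟨p, hp, r, hr, hpr⟩ :=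
    (l2Submodule g).exists_add_mem_mem_orthogonal (WithLp.toLp 2 (u, v))
  refine ⟨p.ofLp, hp, (-r.snd, r.fst), mem_orthogonal_l2Submodule_iff.1 hr, ?_, ?_⟩
  · exact (congrArg WithLp.fst hpr).symm
  · rw [sub_neg_eq_add]
    exact (congrArg WithLp.snd hpr).symm

theorem exists_add_adjoint_eq_and_sub_eq {T : E →ₗ.[𝕜] F} (hT : Dense (T.domain : Set E))
    (hclosed : T.IsClosed) (u : E) (v : F) :
    ∃ (x : T.domain) (y : T.adjoint.domain), (x : E) + T.adjoint y = u ∧ T x - y = v := by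
  obtain ⟨p, hp, q, hq, hu, hv⟩ := exists_mem_exists_mem_adjoint_of_isClosed hclosed u v
  rw [← LinearPMap.adjoint_graph_eq_graph_adjoint hT] at hq
  obtain ⟨x, hx, hTx⟩ := T.mem_graph_iff.1 hp
  obtain ⟨y, hy, hTy⟩ := T.adjoint.mem_graph_iff.1 hq
  exact ⟨x, y, by rw [hx, hTy, hu], by rw [hTx, hy, hv]⟩

theorem id_add_adjoint_comp_surjective_general (T : E →ₗ.[𝕜] F)
    (hT : Dense (T.domain : Set E)) (hclosed : T.IsClosed) (h : E) :
    ∃ (x : T.domain) (hx : T x ∈ T.adjoint.domain), (x : E) + T.adjoint ⟨T x, hx⟩ = h := by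
  obtain ⟨x, y, hxy, hTxy⟩ := exists_add_adjoint_eq_and_sub_eq hT hclosed h 0
  have hy : T x = y := sub_eq_zero.1 hTxy
  have hx : T x ∈ T.adjoint.domain := hy ▸ y.2
  obtain rfl : y = ⟨T x, hx⟩ := Subtype.ext hy.symm
  exact ⟨x, hx, hxy⟩

end

/-- For a closed densely defined operator `T` on a complex Hilbert space, the
operator `I + T*T` is surjective: every `h ∈ H` can be written as `x + T*(T x)`
with `x` in the domain of `T` and `T x` in the domain of `T*`. -/
theorem id_add_adjoint_comp_surjective
    {H : Type*} [NormedAddCommGroup H] [InnerProductSpace ℂ H] [CompleteSpace H]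
    (T : H →ₗ.[ℂ] H) (hT : Dense (T.domain : Set H)) (hclosed : T.IsClosed)
    (h : H) :
    ∃ (x : T.domain) (hx : (T x : H) ∈ T.adjoint.domain),
      (x : H) + T.adjoint ⟨T x, hx⟩ = h :=
  id_add_adjoint_comp_surjective_general T hT hclosed h
end

section
/- Let H be a complex Hilbert space, T : H →ₗ.[ℂ] H a densely defined unbounded operator (LinearPMap) with closed graph, and f ∈ H. Suppose that for each λ > 0 there is u_λ in the domain of T satisfying the normal equation ⟪T u_λ − f, T v⟫ + λ⟪u_λ, v⟫ = 0 for all v in the domain of T. Suppose y is a minimal-norm solution of T u = f, i.e. y lies in the domain of T, T y = f, and ‖y‖ ≤ ‖z‖ for every z in the domain of T with T z = f. Then u_λ converges to y in H as λ → 0⁺ (convergence of λ ↦ u_λ along the filter of positive reals tending to 0). -/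
open MeasureTheory Filter

open scoped Topology

/-!
If `u` and `v` solve the normal equations with parameters `a` and `b`, testing their difference
against `u - v` gives
`2 * ‖T u - T v‖ ^ 2 + (a + b) * ‖u - v‖ ^ 2 = (b - a) * (‖u‖ ^ 2 - ‖v‖ ^ 2)`.
Hence `‖u - v‖ ^ 2 ≤ ‖u‖ ^ 2 - ‖v‖ ^ 2` whenever `0 ≤ a < b`. A least-squares solution `y` is the
case `a = 0`, so the norms of the regularized solutions increase as the parameter decreases and
stay below `‖y‖`; the same inequality then makes the regularized solutions Cauchy. Since `T` is
closed, their limit `x` satisfies `T x = T y`, and `‖y - x‖ ^ 2 ≤ ‖y‖ ^ 2 - ‖x‖ ^ 2 ≤ 0` by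
minimality of `‖y‖`.
-/

theorem cauchy_map_of_dist_sq_le {ι α β : Type*} [PseudoMetricSpace α] [PseudoMetricSpace β]
    {l : Filter ι} {u : ι → α} {φ : ι → β} (hφ : Cauchy (map φ l))
    (h : ∀ᶠ p in l ×ˢ l, dist (u p.1) (u p.2) ^ 2 ≤ dist (φ p.1) (φ p.2)) :
    Cauchy (map u l) := by
  rw [cauchy_map_iff, tendsto_uniformity_iff_dist_tendsto_zero] at hφ ⊢
  obtain ⟨hl, hφ⟩ := hφ
  refine ⟨hl, squeeze_zero' (.of_forall fun _ ↦ dist_nonneg)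
    (h.mono fun _ ↦ Real.le_sqrt_of_sq_le) ?_⟩
  simpa only [Real.sqrt_zero] using hφ.sqrt

section Tikhonov

variable {𝕜 E F : Type*} [RCLike 𝕜] [NormedAddCommGroup E] [InnerProductSpace 𝕜 E]
  [NormedAddCommGroup F] [InnerProductSpace 𝕜 F] {T : E →ₗ.[𝕜] F} {f : F}

/-- `u` is a Tikhonov-regularized solution of `T u = f` with parameter `c`, expressed through the
normal equation of the functional `‖T u - f‖ ^ 2 + c * ‖u‖ ^ 2`. For `c = 0` this says that `u` is a
least-squares solution. -/
def IsTikhonovSolution (T : E →ₗ.[𝕜] F) (f : F) (c : ℝ) (u : T.domain) : Prop :=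
  ∀ v : T.domain, inner 𝕜 (T u - f) (T v) + (c : 𝕜) * inner 𝕜 (u : E) (v : E) = 0

/-- `y` has minimal norm among the least-squares solutions of `T u = f`: it is the value at `f` of
the Moore–Penrose inverse of `T`. -/
structure IsMinNormLeastSquares (T : E →ₗ.[𝕜] F) (f : F) (y : T.domain) : Prop where
  isTikhonovSolution : IsTikhonovSolution T f 0 y
  norm_le : ∀ z : T.domain, IsTikhonovSolution T f 0 z → ‖(y : E)‖ ≤ ‖(z : E)‖

namespace IsTikhonovSolution

variable {a b : ℝ} {u v y : T.domain}

theorem re_inner_add (hu : IsTikhonovSolution T f a u) (w : T.domain) :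
    RCLike.re (inner 𝕜 (T u - f) (T w)) + a * RCLike.re (inner 𝕜 (u : E) (w : E)) = 0 := by
  simpa only [map_add, RCLike.re_ofReal_mul, map_zero] using congrArg RCLike.re (hu w)

theorem two_mul_norm_map_sub_sq_add (hu : IsTikhonovSolution T f a u)
    (hv : IsTikhonovSolution T f b v) :
    2 * ‖T u - T v‖ ^ 2 + (a + b) * ‖(u - v : E)‖ ^ 2 =
      (b - a) * (‖(u : E)‖ ^ 2 - ‖(v : E)‖ ^ 2) := by
  have hTuv : RCLike.re (inner 𝕜 (T u - f) (T (u - v))) -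
      RCLike.re (inner 𝕜 (T v - f) (T (u - v))) = ‖T u - T v‖ ^ 2 := by
    rw [← map_sub, ← inner_sub_left, sub_sub_sub_cancel_right, T.map_sub, inner_self_eq_norm_sq]
  have hu_sub : RCLike.re (inner 𝕜 (u : E) (u - v : T.domain)) =
      ‖(u : E)‖ ^ 2 - RCLike.re (inner 𝕜 (u : E) (v : E)) := by
    rw [Submodule.coe_sub, inner_sub_right, map_sub, inner_self_eq_norm_sq]
  have hv_sub : RCLike.re (inner 𝕜 (v : E) (u - v : T.domain)) =
      RCLike.re (inner 𝕜 (u : E) (v : E)) - ‖(v : E)‖ ^ 2 := by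
    rw [Submodule.coe_sub, inner_sub_right, map_sub, inner_self_eq_norm_sq, inner_re_symm]
  have hu_re := hu.re_inner_add (u - v)
  have hv_re := hv.re_inner_add (u - v)
  rw [hu_sub] at hu_re
  rw [hv_sub] at hv_re
  rw [← hTuv, norm_sub_sq (𝕜 := 𝕜) (u : E) v]
  linear_combination 2 * hu_re - 2 * hv_re

theorem norm_sub_sq_le (hu : IsTikhonovSolution T f a u) (hv : IsTikhonovSolution T f b v)
    (ha : 0 ≤ a) (hab : a < b) :
    ‖(u - v : E)‖ ^ 2 ≤ ‖(u : E)‖ ^ 2 - ‖(v : E)‖ ^ 2 := by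
  refine le_of_mul_le_mul_left ?_ (sub_pos.2 hab)
  calc (b - a) * ‖(u - v : E)‖ ^ 2 ≤ (a + b) * ‖(u - v : E)‖ ^ 2 := by gcongr; linarith
    _ ≤ 2 * ‖T u - T v‖ ^ 2 + (a + b) * ‖(u - v : E)‖ ^ 2 := le_add_of_nonneg_left (by positivity)
    _ = (b - a) * (‖(u : E)‖ ^ 2 - ‖(v : E)‖ ^ 2) := hu.two_mul_norm_map_sub_sq_add hv

theorem norm_sq_le (hu : IsTikhonovSolution T f a u) (hv : IsTikhonovSolution T f b v)
    (ha : 0 ≤ a) (hab : a < b) : ‖(v : E)‖ ^ 2 ≤ ‖(u : E)‖ ^ 2 :=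
  sub_nonneg.1 ((sq_nonneg _).trans (hu.norm_sub_sq_le hv ha hab))

theorem norm_map_sub_sq_le (hu : IsTikhonovSolution T f b u) (hy : IsTikhonovSolution T f 0 y)
    (hb : 0 ≤ b) : ‖T u - T y‖ ^ 2 ≤ b * ‖(y : E)‖ ^ 2 := by
  have hid := hu.two_mul_norm_map_sub_sq_add hy
  have hsub_nonneg : 0 ≤ b * ‖(u - y : E)‖ ^ 2 := by positivity
  have hu_nonneg : 0 ≤ b * ‖(u : E)‖ ^ 2 := by positivity
  have hy_nonneg : 0 ≤ b * ‖(y : E)‖ ^ 2 := by positivity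
  linarith

theorem map_eq_map (hu : IsTikhonovSolution T f 0 u) (hy : IsTikhonovSolution T f 0 y) :
    T u = T y := by
  have hle := hu.norm_map_sub_sq_le hy le_rfl
  rw [zero_mul, sq_nonpos_iff, norm_sub_eq_zero_iff] at hle
  exact hle

theorem of_map_eq (hy : IsTikhonovSolution T f 0 y) (huy : T u = T y) :
    IsTikhonovSolution T f 0 u := fun v ↦ by
  simpa only [RCLike.ofReal_zero, zero_mul, huy] using hy v

theorem of_map_eq_rhs (hy : T y = f) : IsTikhonovSolution T f 0 y := fun v ↦ by
  rw [hy, sub_self, inner_zero_left, RCLike.ofReal_zero, zero_mul, add_zero]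

end IsTikhonovSolution

theorem IsMinNormLeastSquares.of_map_eq {y : T.domain} (hy : T y = f)
    (hmin : ∀ z : T.domain, T z = f → ‖(y : E)‖ ≤ ‖(z : E)‖) : IsMinNormLeastSquares T f y where
  isTikhonovSolution := .of_map_eq_rhs hy
  norm_le z hz := hmin z ((hz.map_eq_map (.of_map_eq_rhs hy)).trans hy)

variable {u : ℝ → T.domain} {y : T.domain}

theorem cauchy_map_tikhonovSolution (hu : ∀ c, 0 < c → IsTikhonovSolution T f c (u c))
    (hy : IsTikhonovSolution T f 0 y) : Cauchy (map (fun c ↦ (u c : E)) (𝓝[>] 0)) := by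
  have hanti : AntitoneOn (fun c ↦ ‖(u c : E)‖ ^ 2) (Set.Ioi 0) := fun a ha b hb hab ↦ by
    obtain rfl | hab := hab.eq_or_lt
    · exact le_rfl
    · exact (hu a ha).norm_sq_le (hu b hb) ha.le hab
  have hbdd : BddAbove ((fun c ↦ ‖(u c : E)‖ ^ 2) '' Set.Ioi 0) :=
    ⟨‖(y : E)‖ ^ 2, Set.forall_mem_image.2 fun c hc ↦ hy.norm_sq_le (hu c hc) le_rfl hc⟩
  refine cauchy_map_of_dist_sq_le (hanti.tendsto_nhdsGT hbdd).cauchy_map ?_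
  filter_upwards [prod_mem_prod self_mem_nhdsWithin self_mem_nhdsWithin] with ⟨a, b⟩ ⟨ha, hb⟩
  wlog hab : a < b generalizing a b
  · obtain rfl | hba := (not_lt.1 hab).eq_or_lt
    · simp
    · simpa only [dist_comm] using this b a hb ha hba
  rw [dist_eq_norm, Real.dist_eq]
  exact ((hu a ha).norm_sub_sq_le (hu b hb) (le_of_lt ha) hab).trans (le_abs_self _)

theorem tendsto_map_tikhonovSolution (hu : ∀ c, 0 < c → IsTikhonovSolution T f c (u c))
    (hy : IsTikhonovSolution T f 0 y) : Tendsto (fun c ↦ T (u c)) (𝓝[>] 0) (𝓝 (T y)) := by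
  have hbound : Tendsto (fun c : ℝ ↦ √(c * ‖(y : E)‖ ^ 2)) (𝓝[>] 0) (𝓝 0) := by
    have hcont : Continuous fun c : ℝ ↦ √(c * ‖(y : E)‖ ^ 2) := by fun_prop
    simpa only [zero_mul, Real.sqrt_zero] using (hcont.tendsto 0).mono_left nhdsWithin_le_nhds
  refine tendsto_iff_norm_sub_tendsto_zero.2
    (squeeze_zero' (.of_forall fun _ ↦ norm_nonneg _) ?_ hbound)
  filter_upwards [self_mem_nhdsWithin] with c hc
  exact Real.le_sqrt_of_sq_le ((hu c hc).norm_map_sub_sq_le hy (le_of_lt hc))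

theorem tikhonov_converges_to_minimal_norm_solution_general [CompleteSpace E] (hT : T.IsClosed)
    (hu : ∀ c, 0 < c → IsTikhonovSolution T f c (u c)) (hy : IsMinNormLeastSquares T f y) :
    Tendsto (fun c ↦ (u c : E)) (𝓝[>] 0) (𝓝 (y : E)) := by
  have hy₀ := hy.isTikhonovSolution
  obtain ⟨x, hx⟩ := cauchy_map_iff_exists_tendsto.1 (cauchy_map_tikhonovSolution hu hy₀)
  have hgraph : (x, T y) ∈ T.graph :=
    IsClosed.mem_of_tendsto hT (hx.prodMk_nhds (tendsto_map_tikhonovSolution hu hy₀))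
      (.of_forall fun c ↦ T.mem_graph (u c))
  obtain ⟨z, rfl, hz⟩ := T.mem_graph_iff.1 hgraph
  have hyz : ‖(y : E)‖ ≤ ‖(z : E)‖ := hy.norm_le z (hy₀.of_map_eq hz)
  have hsub : ‖(y - z : E)‖ ^ 2 ≤ ‖(y : E)‖ ^ 2 - ‖(z : E)‖ ^ 2 := by
    refine le_of_tendsto_of_tendsto ((hx.const_sub _).norm.pow 2) ((hx.norm.pow 2).const_sub _) ?_
    filter_upwards [self_mem_nhdsWithin] with c hc
    exact hy₀.norm_sub_sq_le (hu c hc) le_rfl hc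
  have hsub_nonpos : ‖(y - z : E)‖ ^ 2 ≤ 0 := hsub.trans (sub_nonpos.2 (by gcongr))
  rwa [norm_sub_eq_zero_iff.1 (sq_nonpos_iff _ |>.1 hsub_nonpos)]

end Tikhonov

/-- Convergence of Tikhonov regularized solutions: if `u_λ` solves the normal
equation `⟪T u_λ − f, T v⟫ + λ⟪u_λ, v⟫ = 0` for all `v` in the domain of `T`, and
`y` is a minimal-norm solution of `T u = f`, then `u_λ → y` as `λ → 0⁺`. -/
theorem tikhonov_converges_to_minimal_norm_solution
    {H : Type*} [NormedAddCommGroup H] [InnerProductSpace ℂ H] [CompleteSpace H]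
    (T : H →ₗ.[ℂ] H) (hT : Dense (T.domain : Set H)) (hclosed : T.IsClosed)
    (f : H) (ulam : ℝ → T.domain)
    (hnormal : ∀ lam : ℝ, 0 < lam → ∀ v : T.domain,
      inner (𝕜 := ℂ) ((T (ulam lam) : H) - f) (T v : H) +
        (lam : ℂ) * inner (𝕜 := ℂ) ((ulam lam : H)) ((v : H)) = 0)
    (y : T.domain) (hy : (T y : H) = f)
    (hy_min : ∀ z : T.domain, (T z : H) = f → ‖(y : H)‖ ≤ ‖(z : H)‖) :
    Tendsto (fun lam : ℝ => ((ulam lam : H)))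
      (nhdsWithin 0 (Set.Ioi 0)) (nhds (y : H)) :=
  tikhonov_converges_to_minimal_norm_solution_general hclosed hnormal (.of_map_eq hy hy_min)
end
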